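/- For every integer m ≥ 1 and all x, y ∈ ℝ^{m+1}: ‖F_m(x,x) − F_m(y,y)‖² = −4⟨x,y⟩² + (2/(m(m+1)))·( m²‖x‖⁴ + m²‖y‖⁴ + 2m‖x‖²‖y‖² ). -/

import Mathlib

open RealInnerProductSpace

/-- Dimension of the target of `F_{k+1}`: `dimF k = (k+1)(k+4)/2`. -/
def dimF : ℕ → ℕ
  | 0 => 2
  | (k + 1) => dimF k + (k + 3)

/-- The recursively defined maps `F_{k+1} : ℝ^{k+2} × ℝ^{k+2} → ℝ^{(k+1)(k+4)/2}`
(indexed so that `F k` is the map called `F_{k+1}` in the paper, i.e. `F_m = F (m-1)`):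
`F_1((x₁,x₂),(y₁,y₂)) = (x₁y₁ − x₂y₂, x₁y₂ + x₂y₁)` and
`F_{m+1}((x,x_{m+2}),(y,y_{m+2}))
  = (F_m(x,y), x_{m+2}y + y_{m+2}x, τ_{m+1}(⟨x,y⟩ − (m+1)x_{m+2}y_{m+2}))`
with `τ_{m+1} = √(2/((m+1)(m+2)))`. -/
noncomputable def F : (k : ℕ) → (Fin (k + 2) → ℝ) → (Fin (k + 2) → ℝ) → (Fin (dimF k) → ℝ)
  | 0, x, y => ![x 0 * y 0 - x 1 * y 1, x 0 * y 1 + x 1 * y 0]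
  | (k + 1), x, y =>
      Fin.append (m := dimF k + (k + 2)) (n := 1)
        (Fin.append
          (F k (fun i => x i.castSucc) (fun i => y i.castSucc))
          (fun i : Fin (k + 2) =>
            x (Fin.last (k + 2)) * y i.castSucc + y (Fin.last (k + 2)) * x i.castSucc))
        (fun _ : Fin 1 =>
          Real.sqrt (2 / (((k : ℝ) + 2) * ((k : ℝ) + 3))) *
            ((∑ i : Fin (k + 2), x i.castSucc * y i.castSucc)
              - ((k : ℝ) + 2) * x (Fin.last (k + 2)) * y (Fin.last (k + 2))))

/-- The canonical identification of `Fin n → ℝ` with Euclidean space (used for norms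
and inner products). -/
noncomputable def toE {n : ℕ} (v : Fin n → ℝ) : EuclideanSpace ℝ (Fin n) :=
  (EuclideanSpace.equiv (Fin n) ℝ).symm v

theorem F_sum_aux (k : ℕ) (x y : Fin (k + 2) → ℝ) :
    ∑ i, (F k x x i - F k y y i)^2
      = -4 * (∑ i, x i * y i)^2
        + (2 / (((k : ℝ) + 1) * ((k : ℝ) + 2)))
          * (((k : ℝ) + 1)^2 * (∑ i, x i ^ 2)^2 + ((k : ℝ) + 1)^2 * (∑ i, y i ^ 2)^2
            + 2 * ((k : ℝ) + 1) * (∑ i, x i ^ 2) * (∑ i, y i ^ 2)) := by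
  induction k with
  | zero =>
    have h : ∑ i, (F 0 x x i - F 0 y y i)^2
        = (F 0 x x (0 : Fin 2) - F 0 y y (0 : Fin 2))^2
          + (F 0 x x (1 : Fin 2) - F 0 y y (1 : Fin 2))^2 :=
      Fin.sum_univ_two (fun i : Fin 2 => (F 0 x x i - F 0 y y i)^2)
    rw [h]
    simp [F, Fin.sum_univ_two]
    ring
  | succ k ih =>
    have h : ∑ i, (F (k+1) x x i - F (k+1) y y i)^2
        = ∑ i : Fin (dimF k + (k + 2) + 1), (F (k+1) x x i - F (k+1) y y i)^2 := rfl
    rw [h, Fin.sum_univ_add, Fin.sum_univ_add]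
    simp only [F, Fin.append_left, Fin.append_right]
    rw [ih]
    have e : ∑ i : Fin (k + 2), (x (Fin.last (k + 2)) * x i.castSucc
          + x (Fin.last (k + 2)) * x i.castSucc - (y (Fin.last (k + 2)) * y i.castSucc
          + y (Fin.last (k + 2)) * y i.castSucc))^2
        = 4 * x (Fin.last (k + 2))^2 * (∑ i : Fin (k + 2), x i.castSucc ^ 2)
          + 4 * y (Fin.last (k + 2))^2 * (∑ i : Fin (k + 2), y i.castSucc ^ 2)
          - 8 * x (Fin.last (k + 2)) * y (Fin.last (k + 2))
            * (∑ i : Fin (k + 2), x i.castSucc * y i.castSucc) := by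
      simp only [Finset.mul_sum, ← Finset.sum_add_distrib, ← Finset.sum_sub_distrib]
      exact Finset.sum_congr rfl fun i _ => by ring
    rw [e, Fin.sum_univ_castSucc (fun i => x i * y i), Fin.sum_univ_castSucc (fun i => x i ^ 2),
      Fin.sum_univ_castSucc (fun i => y i ^ 2)]
    simp only [← pow_two, Finset.univ_unique, Finset.sum_const, Finset.card_singleton, one_smul,
      ← mul_sub, mul_pow]
    rw [Real.sq_sqrt (by positivity)]
    generalize (∑ i : Fin (k + 2), x i.castSucc ^ 2) = a
    generalize (∑ i : Fin (k + 2), y i.castSucc ^ 2) = b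
    generalize (∑ i : Fin (k + 2), x i.castSucc * y i.castSucc) = c
    generalize x (Fin.last (k + 2)) = s
    generalize y (Fin.last (k + 2)) = t
    push_cast
    have h1 : (k : ℝ) + 1 ≠ 0 := by positivity
    have h2 : (k : ℝ) + 2 ≠ 0 := by positivity
    have h3 : (k : ℝ) + 3 ≠ 0 := by positivity
    have h4 : (k : ℝ) + 1 + 1 = k + 2 := by ring
    have h5 : (k : ℝ) + 1 + 2 = k + 3 := by ring
    rw [h4, h5]
    field_simp
    ring

/-- For every integer `m ≥ 1` (here `m = k+1`) and all `x, y ∈ ℝ^{m+1}`: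
`‖F_m(x,x) − F_m(y,y)‖² = −4⟨x,y⟩² + (2/(m(m+1)))(m²‖x‖⁴ + m²‖y‖⁴ + 2m‖x‖²‖y‖²)`. -/
theorem norm_sq_F_diff (k : ℕ) (x y : Fin (k + 2) → ℝ) :
    ‖toE (F k x x) - toE (F k y y)‖^2
      = -4 * ⟪toE x, toE y⟫^2
        + (2 / (((k : ℝ) + 1) * ((k : ℝ) + 2)))
          * (((k : ℝ) + 1)^2 * ‖toE x‖^4 + ((k : ℝ) + 1)^2 * ‖toE y‖^4
            + 2 * ((k : ℝ) + 1) * ‖toE x‖^2 * ‖toE y‖^2) := by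
  have hn : ∀ {n : ℕ} (v : Fin n → ℝ), ‖toE v‖^2 = ∑ i, v i ^ 2 := fun v => by
    rw [EuclideanSpace.real_norm_sq_eq]; rfl
  have hi : ⟪toE x, toE y⟫ = ∑ i, x i * y i := by
    simp [toE, PiLp.inner_apply, mul_comm]
  have hd : toE (F k x x) - toE (F k y y) = toE (fun i => F k x x i - F k y y i) := rfl
  have h4 : ∀ r : ℝ, r^4 = (r^2)^2 := fun r => by ring
  rw [hd, hi, h4, h4, hn, hn, hn]
  exact F_sum_aux k x y
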